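/- arXiv:1112.5157 — 2 statements merged into one kernel-verified Lean document; each statement's English description precedes it below -/
import Mathlib

section
/- Let d > 6, let G be a connected d-regular graph such that G² is not complete, let R be a C region of G, and let v ∈ R satisfy deg₂(v) = 2 and N₂'(v) = {u}. Then every vertex of R is at distance at most 2 from u; that is, R ⊆ {u} ∪ N(u) ∪ N₂(u), and moreover R ⊆ G_v ∪ {u}, where G_v is the vertex set of the connected component of G − u containing v. -/
open SimpleGraph

variable {V : Type*}

/-- The set of vertices at distance exactly `i` from `v`. -/
def distSet (G : SimpleGraph V) (v : V) (i : ℕ) : Set V := {u | G.dist v u = i}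

/-- `deg₂ v` : the number of vertices at distance exactly 2 from `v`. -/
noncomputable def deg2 (G : SimpleGraph V) (v : V) : ℕ := (distSet G v 2).ncard

/-- `N₂'(v)` : vertices at distance 2 from `v` that are adjacent to a vertex at
distance 3 from `v`. -/
def N2' (G : SimpleGraph V) (v : V) : Set V :=
  {u | G.dist v u = 2 ∧ ∃ w, G.dist v w = 3 ∧ G.Adj u w}

/-- The square of `G` : an edge between `u` and `v` whenever `1 ≤ d(u,v) ≤ 2`. -/
def graphSquare (G : SimpleGraph V) : SimpleGraph V where
  Adj u v := 1 ≤ G.dist u v ∧ G.dist u v ≤ 2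
  symm := by
    constructor
    intro u v h
    rwa [SimpleGraph.dist_comm]
  loopless := by
    constructor
    intro v h
    simp [SimpleGraph.dist_self] at h

/-- `G` is `d`-regular : every vertex has exactly `d` neighbors. -/
def IsRegularGraph (G : SimpleGraph V) (d : ℕ) : Prop :=
  ∀ v, (G.neighborSet v).ncard = d

/-- The vertex set of the connected component of `G - u` containing `v` :
all vertices reachable from `v` by a walk avoiding `u`. -/
def compDel (G : SimpleGraph V) (u v : V) : Set V :=
  {w | ∃ p : G.Walk v w, u ∉ p.support}

/-- One step of the equivalence relation generating regions : both vertices are low degree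
(`deg₂ ≤ 3`) and they are within distance 2 of each other. -/
def regStep (G : SimpleGraph V) (a b : V) : Prop :=
  deg2 G a ≤ 3 ∧ deg2 G b ≤ 3 ∧ G.Reachable a b ∧ G.dist a b ≤ 2

/-- A region : an equivalence class of low-degree vertices under chains of `regStep`,
together with all neighbors of vertices of the class. -/
def IsRegion (G : SimpleGraph V) (R : Set V) : Prop :=
  ∃ x₀, deg2 G x₀ ≤ 3 ∧
    R = {y | Relation.ReflTransGen (regStep G) x₀ y} ∪
        {y | ∃ x, Relation.ReflTransGen (regStep G) x₀ x ∧ G.Adj x y}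

/-! Since `N₂'(v) = {u}`, walks leave the ball of radius `2` around `v` only through `u`, so the
component `G_v` of `G - u` is that ball without `u` and has exactly `d + 2` vertices. A vertex
`x ∈ G_v` at distance more than `2` from `u` has all its `d` neighbors in `G_v`, but not the common
neighbors of `u` and `v`; hence it misses exactly one vertex `y` besides itself, is adjacent to `v`,
and has `N₂(x) = {y}`, which a C region excludes. So `G_v` lies within distance `2` of `u`, as does
the closed neighborhood of a neighbor of `u` outside `G_v`, and counting gives `deg₂(u) ≥ d + 2`.
Thus `u` is not in the class of `v`. A step of the class around `u` would go from a neighbor `a` of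
`u` in `G_v` to a neighbor `b` outside; every neighbor of `u` is then at distance `2` from `a` or
from `b`, so that `d ≤ deg₂(a) + deg₂(b) ≤ 6`. -/

section

variable {G : SimpleGraph V} {R : Set V} {d : ℕ} {a b p q u v x y z : V}

theorem dist_eq_two_iff :
    G.dist v x = 2 ↔ v ≠ x ∧ ¬ G.Adj v x ∧ (G.commonNeighbors v x).Nonempty := by
  rw [← edist_eq_two_iff, SimpleGraph.dist, ENat.toNat_eq_iff two_ne_zero, Nat.cast_ofNat]

theorem ball_three : G.ball v 3 = insert v (G.neighborSet v ∪ distSet G v 2) := by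
  ext x
  have hfar : 2 < G.edist v x ↔ x ∉ insert v (G.neighborSet v ∪ distSet G v 2) := by
    simp only [two_lt_edist_iff, distSet, Set.mem_insert_iff, Set.mem_union, mem_neighborSet,
      Set.mem_ofPred_eq, dist_eq_two_iff, ← Set.not_nonempty_iff_eq_empty, eq_comm (a := x)]
    tauto
  rw [← not_iff_not, ← hfar, mem_ball, edist_comm, not_lt, ← two_add_one_eq_three,
    ENat.add_one_le_iff (by decide)]

theorem mem_ball_three_iff :
    x ∈ G.ball v 3 ↔ x = v ∨ G.Adj v x ∨ (G.commonNeighbors v x).Nonempty := by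
  rw [ball_three]
  simp only [distSet, Set.mem_insert_iff, Set.mem_union, mem_neighborSet, Set.mem_ofPred_eq,
    dist_eq_two_iff, eq_comm (a := x)]
  tauto

theorem dist_le_two_of_mem_ball_three (hx : x ∈ G.ball v 3) : G.dist v x ≤ 2 := by
  rw [ball_three] at hx
  rcases hx with rfl | hx | hx
  · simp
  · exact (dist_eq_one_iff_adj.mpr hx).trans_le one_le_two
  · exact le_of_eq hx

theorem mem_ball_three_of_reachable (hvx : G.Reachable v x) (h : G.dist v x ≤ 2) :
    x ∈ G.ball v 3 := by
  rw [mem_ball, edist_comm, ← hvx.coe_dist_eq_edist]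
  exact_mod_cast Nat.lt_succ_of_le h

theorem finite_distSet_two (hfin : ∀ w, (G.neighborSet w).Finite) (v : V) :
    (distSet G v 2).Finite := by
  refine ((hfin v).biUnion fun w _ ↦ hfin w).subset fun x hx ↦ ?_
  obtain ⟨m, hvm, hxm⟩ := (dist_eq_two_iff.mp hx).2.2
  exact Set.mem_biUnion hvm hxm.symm

theorem finite_ball_three (hfin : ∀ w, (G.neighborSet w).Finite) (v : V) :
    (G.ball v 3).Finite := by
  rw [ball_three]
  exact ((hfin v).union (finite_distSet_two hfin v)).insert v

theorem ncard_ball_three (hfin : ∀ w, (G.neighborSet w).Finite) (v : V) :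
    (G.ball v 3).ncard = (G.neighborSet v).ncard + deg2 G v + 1 := by
  have hself : v ∉ G.neighborSet v ∪ distSet G v 2 := by simp [distSet]
  have hdisj : Disjoint (G.neighborSet v) (distSet G v 2) :=
    Set.disjoint_left.mpr fun x hx hx2 ↦ (dist_eq_two_iff.mp hx2).2.1 hx
  have hfin2 := finite_distSet_two hfin v
  rw [ball_three, Set.ncard_insert_of_notMem hself ((hfin v).union hfin2),
    Set.ncard_union_eq hdisj (hfin v) hfin2, deg2]

theorem IsRegularGraph.finite_neighborSet (hreg : IsRegularGraph G d) (hd : d ≠ 0) (v : V) :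
    (G.neighborSet v).Finite :=
  Set.finite_of_ncard_ne_zero (hreg v ▸ hd)

theorem mem_N2'_of_adj_of_notMem_ball_three (hx : x ∈ G.ball v 3) (hxy : G.Adj x y)
    (hy : y ∉ G.ball v 3) : x ∈ N2' G v := by
  have hvx : G.dist v x = 2 := by
    rw [ball_three] at hx
    rcases hx with rfl | hx | hx
    · exact absurd (mem_ball_three_iff.mpr (.inr (.inl hxy))) hy
    · exact absurd (mem_ball_three_iff.mpr (.inr (.inr ⟨x, hx, hxy.symm⟩))) hy
    · exact hx
  have hreach : G.Reachable v x := .of_dist_ne_zero (by omega)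
  have hvy : ¬ G.dist v y ≤ 2 := mt (mem_ball_three_of_reachable (hreach.trans hxy.reachable)) hy
  have hstep := hxy.diff_dist_adj (u := v)
  exact ⟨hvx, y, by omega, hxy⟩

theorem mem_compDel_self (hvu : v ≠ u) : v ∈ compDel G u v :=
  ⟨.nil, by simpa using hvu.symm⟩

theorem mem_compDel_of_adj (hx : x ∈ compDel G u v) (hxy : G.Adj x y) (hyu : y ≠ u) :
    y ∈ compDel G u v := by
  obtain ⟨p, hp⟩ := hx
  exact ⟨p.concat hxy, by simpa [Walk.support_concat, hp] using hyu.symm⟩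

theorem neighborSet_subset_compDel (hx : x ∈ compDel G u v) (hux : ¬ G.Adj u x) :
    G.neighborSet x ⊆ compDel G u v := by
  refine fun y hxy ↦ mem_compDel_of_adj hx hxy ?_
  rintro rfl
  exact hux hxy.symm

theorem compDel_subset {S : Set V} (hv : v ∈ S)
    (hS : ∀ x ∈ S, ∀ y, G.Adj x y → y ≠ u → y ∈ S) : compDel G u v ⊆ S := by
  rintro w ⟨p, hp⟩
  induction p with
  | nil => exact hv
  | cons h p ih =>
    rw [Walk.support_cons, List.mem_cons, not_or] at hp
    exact ih (hS _ hv _ h fun hu ↦ hp.2 (hu ▸ p.start_mem_support)) hp.2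

theorem mem_distSet_two_of_mem_compDel (hp : p ∈ compDel G u v) (hq : q ∉ compDel G u v)
    (hup : G.Adj u p) (huq : G.Adj u q) : q ∈ distSet G p 2 :=
  dist_eq_two_iff.mpr ⟨fun h ↦ hq (h ▸ hp), fun h ↦ hq (mem_compDel_of_adj hp h huq.ne'),
    u, hup.symm, huq.symm⟩

theorem ncard_neighborSet_le_deg2_add_deg2 (hfin : ∀ w, (G.neighborSet w).Finite)
    (ha : a ∈ compDel G u v) (hb : b ∉ compDel G u v) (hua : G.Adj u a) (hub : G.Adj u b) :
    (G.neighborSet u).ncard ≤ deg2 G a + deg2 G b := by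
  have hinside : G.neighborSet u ∩ compDel G u v ⊆ distSet G b 2 := fun p hp ↦
    dist_comm.trans (mem_distSet_two_of_mem_compDel hp.2 hb hp.1 hub)
  have houtside : G.neighborSet u \ compDel G u v ⊆ distSet G a 2 := fun q hq ↦
    mem_distSet_two_of_mem_compDel ha hq.2 hua hq.1
  calc (G.neighborSet u).ncard
    _ = (G.neighborSet u ∩ compDel G u v).ncard + (G.neighborSet u \ compDel G u v).ncard :=
        (Set.ncard_inter_add_ncard_sdiff_eq_ncard _ _ (hfin u)).symm
    _ ≤ deg2 G b + deg2 G a :=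
        add_le_add (Set.ncard_le_ncard hinside (finite_distSet_two hfin b))
          (Set.ncard_le_ncard houtside (finite_distSet_two hfin a))
    _ = deg2 G a + deg2 G b := add_comm _ _

theorem mem_compDel_of_regStep (hfin : ∀ w, (G.neighborSet w).Finite)
    (hu : 6 < (G.neighborSet u).ncard) (hu2 : 3 < deg2 G u)
    (ha : a ∈ compDel G u v) (hab : regStep G a b) : b ∈ compDel G u v := by
  obtain ⟨ha3, hb3, hreach, hdist⟩ := hab
  have hbu : b ≠ u := by
    rintro rfl
    exact hb3.not_gt hu2
  rcases mem_ball_three_iff.mp (mem_ball_three_of_reachable hreach hdist) with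
    rfl | hadj | ⟨m, ham, hbm⟩
  · exact ha
  · exact mem_compDel_of_adj ha hadj hbu
  · obtain rfl | hmu := eq_or_ne m u
    · by_contra hb
      have := ncard_neighborSet_le_deg2_add_deg2 hfin ha hb ham.symm hbm.symm
      omega
    · exact mem_compDel_of_adj (mem_compDel_of_adj ha ham hmu) hbm.symm hbu

instance : Std.Symm (regStep G) where
  symm _ _ h := ⟨h.2.1, h.1, h.2.2.1.symm, dist_comm.trans_le h.2.2.2⟩

namespace IsRegion

theorem mem_iff (hR : IsRegion G R) (hvR : v ∈ R) (hv : deg2 G v ≤ 3) :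
    y ∈ R ↔ Relation.ReflTransGen (regStep G) v y ∨
      ∃ x, Relation.ReflTransGen (regStep G) v x ∧ G.Adj x y := by
  obtain ⟨x₀, hx₀, rfl⟩ := hR
  have hlow : ∀ x, Relation.ReflTransGen (regStep G) x₀ x → deg2 G x ≤ 3 := by
    rintro x (_ | ⟨-, hx⟩)
    exacts [hx₀, hx.2.1]
  have hx₀v : Relation.ReflTransGen (regStep G) x₀ v := by
    rcases hvR with hvR | ⟨x, hx, hxv⟩
    · exact hvR
    · exact hx.tail ⟨hlow x hx, hv, hxv.reachable,
        (dist_eq_one_iff_adj.mpr hxv).trans_le one_le_two⟩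
  have hclass : ∀ x, Relation.ReflTransGen (regStep G) x₀ x ↔
      Relation.ReflTransGen (regStep G) v x :=
    fun x ↦ ⟨(symm hx₀v).trans, hx₀v.trans⟩
  simp only [Set.mem_union, Set.mem_ofPred_eq, hclass]

theorem mem_of_adj (hR : IsRegion G R) (hvR : v ∈ R) (hv : deg2 G v ≤ 3) (hvx : G.Adj v x) :
    x ∈ R :=
  (hR.mem_iff hvR hv).mpr (.inr ⟨v, .refl, hvx⟩)

theorem subset_compDel_union (hR : IsRegion G R) (hfin : ∀ w, (G.neighborSet w).Finite)
    (hu : 6 < (G.neighborSet u).ncard) (hu2 : 3 < deg2 G u) (hvR : v ∈ R)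
    (hv : deg2 G v ≤ 3) : R ⊆ compDel G u v ∪ {u} := by
  have hvu : v ≠ u := by
    rintro rfl
    exact hv.not_gt hu2
  have hclass : ∀ x, Relation.ReflTransGen (regStep G) v x → x ∈ compDel G u v := by
    intro x hx
    induction hx with
    | refl => exact mem_compDel_self hvu
    | tail _ hstep ih => exact mem_compDel_of_regStep hfin hu hu2 ih hstep
  intro y hy
  rcases (hR.mem_iff hvR hv).mp hy with hy | ⟨x, hx, hxy⟩
  · exact .inl (hclass y hy)
  · exact or_iff_not_imp_right.mpr (mem_compDel_of_adj (hclass x hx) hxy)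

end IsRegion

theorem dist_eq_two_of_N2'_eq_singleton (hN : N2' G v = {u}) : G.dist v u = 2 :=
  (hN ▸ rfl : u ∈ N2' G v).1

theorem compDel_eq_ball_three_diff (hN : N2' G v = {u}) :
    compDel G u v = G.ball v 3 \ {u} := by
  obtain ⟨hvu, hvu', -⟩ := dist_eq_two_iff.mp (dist_eq_two_of_N2'_eq_singleton hN)
  apply subset_antisymm
  · refine compDel_subset ⟨mem_ball_self (by simp), hvu⟩ fun x hx y hxy hyu ↦ ⟨?_, hyu⟩
    by_contra hy
    exact hx.2 (hN ▸ mem_N2'_of_adj_of_notMem_ball_three hx.1 hxy hy)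
  · rintro x ⟨hx, hxu⟩
    have hv := mem_compDel_self (G := G) hvu
    rcases mem_ball_three_iff.mp hx with rfl | hvx | ⟨m, hvm, hxm⟩
    · exact hv
    · exact mem_compDel_of_adj hv hvx hxu
    · have hmu : m ≠ u := fun h ↦ hvu' (h ▸ hvm)
      exact mem_compDel_of_adj (mem_compDel_of_adj hv hvm hmu) hxm.symm hxu

theorem ncard_compDel (hfin : ∀ w, (G.neighborSet w).Finite) (hN : N2' G v = {u}) :
    (compDel G u v).ncard = (G.neighborSet v).ncard + deg2 G v := by
  have hu : u ∈ G.ball v 3 := by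
    rw [ball_three]
    exact .inr (.inr (dist_eq_two_of_N2'_eq_singleton hN))
  rw [compDel_eq_ball_three_diff hN, Set.ncard_sdiff_singleton_of_mem hu, ncard_ball_three hfin,
    Nat.add_sub_cancel]

theorem neighborSet_eq_diff_pair {S : Set V} (hsub : G.neighborSet x ⊆ S) (hx : x ∈ S)
    (hy : y ∈ S) (hne : x ≠ y) (hadj : ¬ G.Adj x y)
    (hcard : S.ncard = (G.neighborSet x).ncard + 2) :
    G.neighborSet x = S \ {x, y} := by
  have hfin : S.Finite := Set.finite_of_ncard_ne_zero (by omega)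
  have hsub' : G.neighborSet x ⊆ S \ {x, y} := by
    refine fun w hw ↦ ⟨hsub hw, ?_⟩
    rintro (rfl | rfl)
    exacts [G.irrefl hw, hadj hw]
  have hcard' := Set.ncard_sdiff_add_ncard_of_subset (Set.pair_subset hx hy) hfin
  rw [Set.ncard_pair hne] at hcard'
  exact Set.eq_of_subset_of_ncard_le hsub' (by omega) hfin.sdiff

theorem distSet_two_eq_singleton {S : Set V} (hx : G.neighborSet x = S \ {x, y}) (hne : x ≠ y)
    (hS : ∀ m, G.Adj x m → G.neighborSet m ⊆ S) (hxv : G.Adj x v) (hvy : G.Adj v y) :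
    distSet G x 2 = {y} := by
  have hadj : ∀ w, G.Adj x w ↔ w ∈ S ∧ w ≠ x ∧ w ≠ y := by
    simpa [Set.ext_iff] using hx
  ext w
  rw [distSet, Set.mem_ofPred_eq, dist_eq_two_iff, Set.mem_singleton_iff]
  constructor
  · rintro ⟨hxw, hnadj, m, hxm, hwm⟩
    by_contra hwy
    exact hnadj ((hadj w).mpr ⟨hS m hxm hwm.symm, hxw.symm, hwy⟩)
  · rintro rfl
    exact ⟨hne, fun h ↦ ((hadj w).mp h).2.2 rfl, v, hxv, hvy.symm⟩

theorem adj_and_deg2_eq_one_of_notMem_ball_three (hfin : ∀ w, (G.neighborSet w).Finite)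
    (hv : deg2 G v = 2) (hN : N2' G v = {u})
    (hdeg : (G.neighborSet x).ncard = (G.neighborSet v).ncard)
    (hx : x ∈ compDel G u v) (hxu : x ∉ G.ball u 3) : G.Adj v x ∧ deg2 G x = 1 := by
  obtain ⟨hvu, -, y, hvy, huy⟩ := dist_eq_two_iff.mp (dist_eq_two_of_N2'_eq_singleton hN)
  have hvC : v ∈ compDel G u v := mem_compDel_self hvu
  have hyC : y ∈ compDel G u v := mem_compDel_of_adj hvC hvy huy.ne'
  have hux : ¬ G.Adj u x := fun h ↦ hxu (mem_ball_three_iff.mpr (.inr (.inl h)))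
  have hum : ∀ m, G.Adj x m → ¬ G.Adj u m := fun m hxm hum ↦
    hxu (mem_ball_three_iff.mpr (.inr (.inr ⟨m, hum, hxm⟩)))
  have hxy : x ≠ y := by
    rintro rfl
    exact hux huy
  have hsub : G.neighborSet x ⊆ compDel G u v := neighborSet_subset_compDel hx hux
  have hNx : G.neighborSet x = compDel G u v \ {x, y} :=
    neighborSet_eq_diff_pair hsub hx hyC hxy (fun h ↦ hum y h huy)
      (by rw [ncard_compDel hfin hN, hv, hdeg])
  have hxv : v ∈ G.neighborSet x := by
    have hvx : v ≠ x := by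
      rintro rfl
      exact hum y hvy huy
    exact hNx ▸ ⟨hvC, by simp [hvx, hvy.ne]⟩
  have hN2x : distSet G x 2 = {y} := distSet_two_eq_singleton hNx hxy
    (fun m hxm ↦ neighborSet_subset_compDel (hsub hxm) (hum m hxm)) hxv hvy
  exact ⟨hxv.symm, by rw [deg2, hN2x, Set.ncard_singleton]⟩

theorem compDel_subset_ball_three (hreg : IsRegularGraph G d) (hd : d ≠ 0)
    (hv : deg2 G v = 2) (hN : N2' G v = {u}) (hC : ∀ x, G.Adj v x → deg2 G x ≠ 1) :
    compDel G u v ⊆ G.ball u 3 := by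
  intro x hx
  by_contra hxu
  obtain ⟨hvx, hx1⟩ := adj_and_deg2_eq_one_of_notMem_ball_three (hreg.finite_neighborSet hd)
    hv hN ((hreg x).trans (hreg v).symm) hx hxu
  exact hC x hvx hx1

theorem ncard_compDel_add_le (hfin : ∀ w, (G.neighborSet w).Finite)
    (hball : compDel G u v ⊆ G.ball u 3) (huz : G.Adj u z) (hz : z ∉ compDel G u v) :
    (compDel G u v).ncard + (G.neighborSet z).ncard ≤ (G.neighborSet u).ncard + deg2 G u := by
  have hfinB := finite_ball_three hfin u
  have hdisj : Disjoint (compDel G u v) (insert z (G.neighborSet z)) := by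
    rw [Set.disjoint_left]
    rintro x hx (rfl | hzx)
    · exact hz hx
    · exact hz (mem_compDel_of_adj hx hzx.symm huz.ne')
  have hsub : compDel G u v ∪ insert z (G.neighborSet z) ⊆ G.ball u 3 := by
    refine Set.union_subset hball (Set.insert_subset ?_ fun x hzx ↦ ?_)
    · exact mem_ball_three_iff.mpr (.inr (.inl huz))
    · exact mem_ball_three_iff.mpr (.inr (.inr ⟨z, huz, hzx.symm⟩))
  have hcard := Set.ncard_le_ncard hsub hfinB
  rw [Set.ncard_union_eq hdisj (hfinB.subset hball) ((hfin z).insert z),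
    Set.ncard_insert_of_notMem G.notMem_neighborSet_self (hfin z),
    ncard_ball_three hfin] at hcard
  omega

theorem add_deg2_le_deg2_of_compDel_subset (hreg : IsRegularGraph G d) (hd : d ≠ 0)
    (hN : N2' G v = {u}) (hball : compDel G u v ⊆ G.ball u 3) :
    d + deg2 G v ≤ deg2 G u := by
  have hfin := hreg.finite_neighborSet hd
  obtain ⟨-, z, hvz, huz⟩ : u ∈ N2' G v := hN ▸ rfl
  have hz : z ∉ compDel G u v := by
    rw [compDel_eq_ball_three_diff hN]
    intro hz
    have := dist_le_two_of_mem_ball_three hz.1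
    omega
  have hcard := ncard_compDel_add_le hfin hball huz hz
  rw [ncard_compDel hfin hN, hreg, hreg, hreg] at hcard
  omega

end

theorem stmt9_general {G : SimpleGraph V} {d : ℕ} (hd : 6 < d) (hreg : IsRegularGraph G d)
    {R : Set V} (hR : IsRegion G R) (hC : ∀ x ∈ R, deg2 G x ≠ 1) {v u : V} (hvR : v ∈ R)
    (hv : deg2 G v = 2) (hN : N2' G v = {u}) :
    (∀ x ∈ R, G.dist u x ≤ 2) ∧ R ⊆ compDel G u v ∪ {u} := by
  have hd0 : d ≠ 0 := by omega
  have hball : compDel G u v ⊆ G.ball u 3 := compDel_subset_ball_three hreg hd0 hv hN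
    fun x hvx ↦ hC x (hR.mem_of_adj hvR (by omega) hvx)
  have hu2 : d + deg2 G v ≤ deg2 G u :=
    add_deg2_le_deg2_of_compDel_subset hreg hd0 hN hball
  have hsub : R ⊆ compDel G u v ∪ {u} := hR.subset_compDel_union (hreg.finite_neighborSet hd0)
    (hd.trans_eq (hreg u).symm) (by omega) hvR (by omega)
  refine ⟨fun x hx ↦ ?_, hsub⟩
  rcases hsub hx with hx | rfl
  · exact dist_le_two_of_mem_ball_three (hball hx)
  · simp

/-- Let `d > 6`, `G` connected `d`-regular with `G²` not complete, `R` a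
C region of `G` (a region with no vertex of `deg₂ = 1`), and `v ∈ R` with `deg₂(v) = 2`
and `N₂'(v) = {u}`. Then every vertex of `R` is within distance 2 of `u`, and
`R ⊆ G_v ∪ {u}` where `G_v` is the component of `G - u` containing `v`. -/
theorem stmt9 {V : Type*} [Fintype V] (G : SimpleGraph V) (d : ℕ) (hd : 6 < d)
    (hconn : G.Connected) (hreg : IsRegularGraph G d) (hnotcomplete : graphSquare G ≠ ⊤)
    (R : Set V) (hR : IsRegion G R) (hC : ∀ x ∈ R, deg2 G x ≠ 1)
    (v u : V) (hvR : v ∈ R) (hv : deg2 G v = 2) (hN : N2' G v = {u}) :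
    (∀ x ∈ R, G.dist u x ≤ 2) ∧ R ⊆ compDel G u v ∪ {u} :=
  stmt9_general hd hreg hR hC hvR hv hN
end

section
/- Let d > 6 be odd, let G be a connected d-regular graph such that G² is not complete, and suppose G is not a snake graph. Let R = T₁ ∪ ⋯ ∪ T_m and R' = T'₁ ∪ ⋯ ∪ T'_{m'}, where {T₁, …, T_m} and {T'₁, …, T'_{m'}} are each maximal collections of proper tails of G whose members all have the same outside attachment vertex (u_{T₁} = ⋯ = u_{T_m}, and u_{T'₁} = ⋯ = u_{T'_{m'}}). If R ∩ R' ≠ ∅, then R = R'. -/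
open SimpleGraph

variable {V : Type*}

/-- The complement of the induced subgraph of `G` on `S` is precisely a perfect matching
on `M ⊆ S` : there is a fixed-point-free involution `m` of `M` such that the non-adjacent
pairs of distinct vertices inside `S` are exactly the matched pairs. -/
def ComplIsMatchingOn (G : SimpleGraph V) (S M : Set V) : Prop :=
  M ⊆ S ∧ ∃ m : V → V,
    (∀ x ∈ M, m x ∈ M ∧ m x ≠ x ∧ m (m x) = x) ∧
    (∀ a ∈ S, ∀ b ∈ S, a ≠ b → (¬ G.Adj a b ↔ (a ∈ M ∧ b = m a)))

/-- A tail with `k ≥ 1` segments in the graph `G` (for degree `d`). -/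
structure Tail (G : SimpleGraph V) (d : ℕ) where
  /-- the vertex set of the tail -/
  carrier : Set V
  /-- the number of segments -/
  k : ℕ
  /-- the segments `R₁, …, R_k` -/
  seg : ℕ → Set V
  /-- the vertex `v` of the first segment with `deg₂ v = 1` -/
  v0 : V
  /-- the vertex `u` with `N₂(v) = {u}` -/
  u0 : V
  /-- the endpoints `v_i` of the removed edges of later segments -/
  vt : ℕ → V
  /-- the endpoints `v_i'` of the removed edges of later segments -/
  vt' : ℕ → V
  /-- the unique vertex `w_T` of the tail having a neighbor outside the tail -/
  w : V
  /-- the unique neighbor `u_T` of `w_T` outside the tail -/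
  uT : V
  k_pos : 1 ≤ k
  carrier_eq : carrier = ⋃ i ∈ Set.Icc 1 k, seg i
  seg_disj : ∀ i ∈ Set.Icc 1 k, ∀ j ∈ Set.Icc 1 k, i ≠ j → Disjoint (seg i) (seg j)
  seg1 : seg 1 = {v0} ∪ G.neighborSet v0 ∪ {u0}
  seg1_card : (seg 1).ncard = d + 2
  deg2_v0 : deg2 G v0 = 1
  dist2_v0 : distSet G v0 2 = {u0}
  u0_nbrs : (G.neighborSet u0 ∩ G.neighborSet v0).ncard = d - 1
  compl_matching :
    ComplIsMatchingOn G ({v0} ∪ G.neighborSet v0) (G.neighborSet u0 ∩ G.neighborSet v0)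
  seg_card : ∀ i ∈ Set.Icc 2 k, (seg i).ncard = d + 1
  vt_mem : ∀ i ∈ Set.Icc 2 k, vt i ∈ seg i
  vt'_mem : ∀ i ∈ Set.Icc 2 k, vt' i ∈ seg i
  vt_ne : ∀ i ∈ Set.Icc 2 k, vt i ≠ vt' i
  seg_adj : ∀ i ∈ Set.Icc 2 k, ∀ a ∈ seg i, ∀ b ∈ seg i, a ≠ b →
    (G.Adj a b ↔ ({a, b} : Set V) ≠ {vt i, vt' i})
  inter_seg : ∀ i ∈ Set.Icc 1 k, ∀ j ∈ Set.Icc 1 k, i ≠ j → ∀ a ∈ seg i, ∀ b ∈ seg j,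
    (G.Adj a b ↔ ((i = 1 ∧ j = 2 ∧ a = u0 ∧ b = vt 2) ∨
                  (j = 1 ∧ i = 2 ∧ b = u0 ∧ a = vt 2) ∨
                  (i + 1 = j ∧ 2 ≤ i ∧ a = vt' i ∧ b = vt j) ∨
                  (j + 1 = i ∧ 2 ≤ j ∧ b = vt' j ∧ a = vt i)))
  w_eq_of_k_ge_two : 2 ≤ k → w = vt' k
  w_eq_of_k_eq_one : k = 1 → w = u0
  w_mem : w ∈ carrier
  uT_not_mem : uT ∉ carrier
  w_adj_uT : G.Adj w uT
  w_unique_out : ∀ b, G.Adj w b → b ∉ carrier → b = uT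
  others_in : ∀ a ∈ carrier, a ≠ w → ∀ b, G.Adj a b → b ∈ carrier

/-- A tail is proper if it is not contained in a strictly larger tail. -/
def IsProperTail (G : SimpleGraph V) (d : ℕ) (t : Tail G d) : Prop :=
  ∀ t' : Tail G d, t.carrier ⊆ t'.carrier → t.carrier = t'.carrier

/-- A snake graph : a connected `d`-regular graph which is the disjoint union of two tails,
the only edge joining them being `w_T w_{T'}`. -/
def IsSnake (G : SimpleGraph V) (d : ℕ) : Prop :=
  G.Connected ∧ IsRegularGraph G d ∧
  ∃ t t' : Tail G d,
    Disjoint t.carrier t'.carrier ∧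
    t.carrier ∪ t'.carrier = Set.univ ∧
    t.uT = t'.w ∧ t'.uT = t.w ∧
    (∀ a ∈ t.carrier, ∀ b ∈ t'.carrier, G.Adj a b → a = t.w ∧ b = t'.w)

/-
The edge `w_T u_T` is the only one leaving a tail `T`, so a tail is one side of a bridge of `G`.
A segment has no bridge of its own, hence no bridge of `G` separates two vertices of one segment.
Let `T` and `T'` be proper tails that meet. If the bridge of `T'` is not the link between two
consecutive segments of `T`, then `T` lies on one side of it, so `T ⊆ T'` and `T = T'` because `T`
is proper. Otherwise the initial part `P` of `T` ending at that link is a tail with the same bridge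
as `T'`. As a bridge of a connected graph determines its two sides, either `T' = P` is strictly
contained in `T` and not proper, or `T'` is the complement of `P` and `G` is a snake graph.
-/

/-- The vertex set `S` is joined to its complement by a single edge, which leads from `p ∈ S` to
`q ∉ S`. When `G` is connected this says that `pq` is a bridge and `S` is the side of `p`. -/
structure IsBridgeCut (G : SimpleGraph V) (S : Set V) (p q : V) : Prop where
  adj : G.Adj p q
  left_mem : p ∈ S
  right_notMem : q ∉ S
  eq_of_adj : ∀ ⦃a b⦄, G.Adj a b → a ∈ S → b ∉ S → a = p ∧ b = q

namespace IsBridgeCut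

variable {G : SimpleGraph V} {S S' : Set V} {a b c c' p q : V}

protected theorem compl (hS : IsBridgeCut G S p q) : IsBridgeCut G Sᶜ q p where
  adj := hS.adj.symm
  left_mem := hS.right_notMem
  right_notMem := not_not.2 hS.left_mem
  eq_of_adj _ _ hab ha hb := (hS.eq_of_adj hab.symm (not_not.1 hb) ha).symm

theorem subset_of_preconnected (hG : G.Preconnected) (hS : IsBridgeCut G S p q)
    (hS' : IsBridgeCut G S' p q) : S ⊆ S' := by
  by_contra hsub
  obtain ⟨y, hyS, hyS'⟩ := Set.not_subset.1 hsub
  obtain ⟨walk⟩ := hG y p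
  obtain ⟨e, -, he, he'⟩ :=
    walk.exists_boundary_dart (S \ S') ⟨hyS, hyS'⟩ fun hp => hp.2 hS'.left_mem
  by_cases hsnd : e.snd ∈ S
  · have hsnd' : e.snd ∈ S' := by_contra fun h => he' ⟨hsnd, h⟩
    exact hS.right_notMem ((hS'.eq_of_adj e.adj.symm hsnd' he.2).2 ▸ he.1)
  · exact he.2 ((hS.eq_of_adj e.adj he.1 hsnd).1 ▸ hS'.left_mem)

theorem eq_of_preconnected (hG : G.Preconnected) (hS : IsBridgeCut G S p q)
    (hS' : IsBridgeCut G S' p q) : S = S' :=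
  (hS.subset_of_preconnected hG hS').antisymm (hS'.subset_of_preconnected hG hS)

theorem mem_of_adj_of_adj (hS : IsBridgeCut G S p q) (hc : c ∈ S) (hc' : c' ∈ S) (hne : c ≠ c')
    (hcb : G.Adj c b) (hcb' : G.Adj c' b) : b ∈ S := by
  by_contra hb
  exact hne ((hS.eq_of_adj hcb hc hb).1.trans (hS.eq_of_adj hcb' hc' hb).1.symm)

theorem mem_of_mem_commonNeighbors (hS : IsBridgeCut G S p q) (ha : a ∈ S)
    (hc : c ∈ G.commonNeighbors a b) (hc' : c' ∈ G.commonNeighbors a b) (hne : c ≠ c') :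
    b ∈ S := by
  by_contra hb
  have crossing : ∀ x ∈ G.commonNeighbors a b, x = p ∨ a = p ∧ x = q := fun x hx => by
    by_cases hxS : x ∈ S
    · exact .inl (hS.eq_of_adj hx.2.symm hxS hb).1
    · exact .inr (hS.eq_of_adj hx.1 ha hxS)
  rcases crossing c hc with hcp | ⟨hap, hcq⟩ <;> rcases crossing c' hc' with hcp' | ⟨hap', hcq'⟩
  · exact hne (hcp.trans hcp'.symm)
  · exact hc.1.ne (hap'.trans hcp.symm)
  · exact hc'.1.ne (hap.trans hcp'.symm)
  · exact hne (hcq.trans hcq'.symm)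

end IsBridgeCut

namespace ComplIsMatchingOn

variable {G : SimpleGraph V} {S M : Set V}

theorem adj_of_notMem (h : ComplIsMatchingOn G S M) {a b : V} (ha : a ∈ S) (hb : b ∈ S)
    (hab : a ≠ b) (haM : a ∉ M) : G.Adj a b := by
  obtain ⟨-, m, -, hm⟩ := h
  by_contra hnadj
  exact haM ((hm a ha b hb hab).1 hnadj).1

theorem nontrivial (h : ComplIsMatchingOn G S M) (hM : M.Nonempty) : M.Nontrivial := by
  obtain ⟨-, m, hm, -⟩ := h
  obtain ⟨x, hx⟩ := hM
  exact ⟨x, hx, m x, (hm x hx).1, (hm x hx).2.1.symm⟩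

end ComplIsMatchingOn

namespace Tail

variable {G : SimpleGraph V} {d : ℕ} (t : Tail G d)

theorem isBridgeCut : IsBridgeCut G t.carrier t.w t.uT where
  adj := t.w_adj_uT
  left_mem := t.w_mem
  right_notMem := t.uT_not_mem
  eq_of_adj a b hab ha hb := by
    obtain rfl : a = t.w := by_contra fun haw => hb (t.others_in a ha haw b hab)
    exact ⟨rfl, t.w_unique_out b hab hb⟩

theorem mem_carrier {x : V} : x ∈ t.carrier ↔ ∃ i ∈ Set.Icc 1 t.k, x ∈ t.seg i := by
  simp only [t.carrier_eq, Set.mem_iUnion, exists_prop]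

theorem seg_index_unique {x : V} {i j : ℕ} (hi : i ∈ Set.Icc 1 t.k) (hj : j ∈ Set.Icc 1 t.k)
    (hxi : x ∈ t.seg i) (hxj : x ∈ t.seg j) : i = j := by
  by_contra hij
  exact Set.disjoint_left.1 (t.seg_disj i hi j hj hij) hxi hxj

theorem nontrivial_commonNeighbors : (G.commonNeighbors t.u0 t.v0).Nontrivial := by
  have hdist : G.dist t.v0 t.u0 = 2 := t.dist2_v0.ge rfl
  have hedist : G.edist t.v0 t.u0 = 2 := by
    rwa [SimpleGraph.dist, ENat.toNat_eq_iff two_ne_zero] at hdist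
  have hne := (edist_eq_two_iff.1 hedist).2.2
  rw [commonNeighbors_symm] at hne
  exact t.compl_matching.nontrivial hne

theorem finite_seg_one : (t.seg 1).Finite :=
  Set.finite_of_ncard_ne_zero (by rw [t.seg1_card]; omega)

theorem commonNeighbors_subset_seg_one : G.commonNeighbors t.u0 t.v0 ⊆ t.seg 1 := by
  rw [t.seg1]
  exact fun x hx => .inl (.inr hx.2)

theorem ncard_commonNeighbors : (G.commonNeighbors t.u0 t.v0).ncard = d - 1 :=
  t.u0_nbrs

theorem two_lt_degree (t : Tail G d) : 2 < d := by
  have hcard : 1 < (G.commonNeighbors t.u0 t.v0).ncard :=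
    Set.one_lt_ncard_iff_nontrivial_and_finite.2
      ⟨t.nontrivial_commonNeighbors, t.finite_seg_one.subset t.commonNeighbors_subset_seg_one⟩
  rw [t.ncard_commonNeighbors] at hcard
  omega

theorem exists_adj_v0_not_adj_u0 : ∃ z, G.Adj t.v0 z ∧ ¬ G.Adj t.u0 z := by
  by_contra! hall
  have hsub : t.seg 1 ⊆ insert t.v0 (insert t.u0 (G.commonNeighbors t.u0 t.v0)) := by
    rw [t.seg1]
    rintro x ((hx | hx) | hx)
    · exact .inl hx
    · exact .inr (.inr ⟨hall x hx, hx⟩)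
    · exact .inr (.inl hx)
  have hfin := t.finite_seg_one.subset t.commonNeighbors_subset_seg_one
  have hcard := Set.ncard_le_ncard hsub ((hfin.insert _).insert _)
  have hv0 := Set.ncard_insert_le t.v0 (insert t.u0 (G.commonNeighbors t.u0 t.v0))
  have hu0 := Set.ncard_insert_le t.u0 (G.commonNeighbors t.u0 t.v0)
  rw [t.seg1_card] at hcard
  rw [t.ncard_commonNeighbors] at hu0
  have := t.two_lt_degree
  omega

theorem adj_of_mem_seg {i : ℕ} (hi : i ∈ Set.Icc 2 t.k) {a b : V} (ha : a ∈ t.seg i)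
    (hb : b ∈ t.seg i \ {t.vt i, t.vt' i}) (hab : a ≠ b) : G.Adj a b :=
  (t.seg_adj i hi a ha b hb.1 hab).2 fun h => hb.2 (h ▸ .inr rfl)

theorem nontrivial_seg_sdiff {i : ℕ} (hi : i ∈ Set.Icc 2 t.k) :
    (t.seg i \ {t.vt i, t.vt' i}).Nontrivial := by
  have hcard := Set.le_ncard_sdiff {t.vt i, t.vt' i} (t.seg i)
  rw [t.seg_card i hi, Set.ncard_pair (t.vt_ne i hi)] at hcard
  have := t.two_lt_degree
  exact (Set.one_lt_ncard_iff_nontrivial_and_finite.1 (by omega)).1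

section Separation

variable {t} {S : Set V} {p q : V}

theorem seg_one_subset (hS : IsBridgeCut G S p q) (hv0 : t.v0 ∈ S) : t.seg 1 ⊆ S := by
  obtain ⟨x, hx, x', hx', hne⟩ := t.nontrivial_commonNeighbors
  obtain ⟨z, hz, hzu0⟩ := t.exists_adj_v0_not_adj_u0
  have adj_z : ∀ y, G.Adj t.v0 y → z ≠ y → G.Adj z y := fun y hy hzy =>
    t.compl_matching.adj_of_notMem (.inr hz) (.inr hy) hzy fun hM => hzu0 hM.1
  have mem_commonNeighbors : ∀ y ∈ G.commonNeighbors t.u0 t.v0, y ∈ G.commonNeighbors t.v0 z :=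
    fun y hy => ⟨hy.2, adj_z y hy.2 (by rintro rfl; exact hzu0 hy.1)⟩
  have hzS : z ∈ S := hS.mem_of_mem_commonNeighbors hv0 (mem_commonNeighbors x hx)
    (mem_commonNeighbors x' hx') hne
  have hN : G.neighborSet t.v0 ⊆ S := fun y hy => by
    rcases eq_or_ne z y with rfl | hzy
    · exact hzS
    · exact hS.mem_of_adj_of_adj hv0 hzS hz.ne hy (adj_z y hy hzy)
  have hu0 : t.u0 ∈ S := hS.mem_of_adj_of_adj (hN hx.2) (hN hx'.2) hne hx.1.symm hx'.1.symm
  rw [t.seg1]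
  exact Set.union_subset (Set.union_subset (Set.singleton_subset_iff.2 hv0) hN)
    (Set.singleton_subset_iff.2 hu0)

theorem seg_subset {i : ℕ} (hi : i ∈ Set.Icc 2 t.k) (hS : IsBridgeCut G S p q)
    (hvt : t.vt i ∈ S) : t.seg i ⊆ S := by
  obtain ⟨c, hc, c', hc', hne⟩ := t.nontrivial_seg_sdiff hi
  have vt_adj : ∀ y ∈ t.seg i \ {t.vt i, t.vt' i}, G.Adj (t.vt i) y := fun y hy =>
    t.adj_of_mem_seg hi (t.vt_mem i hi) hy fun h => hy.2 (.inl h.symm)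
  have vt'_adj : ∀ y ∈ t.seg i \ {t.vt i, t.vt' i}, G.Adj (t.vt' i) y := fun y hy =>
    t.adj_of_mem_seg hi (t.vt'_mem i hi) hy fun h => hy.2 (.inr h.symm)
  have hvt' : t.vt' i ∈ S := hS.mem_of_mem_commonNeighbors hvt ⟨vt_adj c hc, vt'_adj c hc⟩
    ⟨vt_adj c' hc', vt'_adj c' hc'⟩ hne
  intro y hy
  by_cases hyv : y ∈ ({t.vt i, t.vt' i} : Set V)
  · exact Set.pair_subset hvt hvt' hyv
  · exact hS.mem_of_adj_of_adj hvt hvt' (t.vt_ne i hi) (vt_adj y ⟨hy, hyv⟩) (vt'_adj y ⟨hy, hyv⟩)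

theorem seg_subset_or_subset_compl {i : ℕ} (hi : i ∈ Set.Icc 1 t.k) (hS : IsBridgeCut G S p q) :
    t.seg i ⊆ S ∨ t.seg i ⊆ Sᶜ := by
  rcases hi.1.eq_or_lt with rfl | hi1
  · exact (em (t.v0 ∈ S)).imp (seg_one_subset hS) (seg_one_subset hS.compl)
  · exact (em (t.vt i ∈ S)).imp (seg_subset ⟨hi1, hi.2⟩ hS) (seg_subset ⟨hi1, hi.2⟩ hS.compl)

theorem mem_iff_mem_of_mem_seg {i : ℕ} (hi : i ∈ Set.Icc 1 t.k) (hS : IsBridgeCut G S p q)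
    {a b : V} (ha : a ∈ t.seg i) (hb : b ∈ t.seg i) : a ∈ S ↔ b ∈ S := by
  rcases seg_subset_or_subset_compl hi hS with h | h
  · exact iff_of_true (h ha) (h hb)
  · exact iff_of_false (h ha) (h hb)

end Separation

/-- The vertex through which the segment `R_i` is left in the direction of `R_{i+1}` (or of `u_T`
when `i = k`): it is `u` for `i = 1` and `v_i'` for `i ≥ 2`. -/
def exitVertex (i : ℕ) : V := if i = 1 then t.u0 else t.vt' i

theorem exitVertex_mem_seg {i : ℕ} (hi : i ∈ Set.Icc 1 t.k) : t.exitVertex i ∈ t.seg i := by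
  rw [exitVertex]
  split_ifs with hi1
  · rw [hi1, t.seg1]
    exact .inr rfl
  · exact t.vt'_mem i ⟨by have := hi.1; omega, hi.2⟩

theorem w_eq_exitVertex : t.w = t.exitVertex t.k := by
  rw [exitVertex]
  split_ifs with hk
  · exact t.w_eq_of_k_eq_one hk
  · exact t.w_eq_of_k_ge_two (by have := t.k_pos; omega)

theorem adj_iff_of_lt {i j : ℕ} (hi : 1 ≤ i) (hij : i < j) (hj : j ≤ t.k) {a b : V}
    (ha : a ∈ t.seg i) (hb : b ∈ t.seg j) :
    G.Adj a b ↔ j = i + 1 ∧ a = t.exitVertex i ∧ b = t.vt (i + 1) := by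
  rw [t.inter_seg i ⟨hi, by omega⟩ j ⟨by omega, hj⟩ hij.ne a ha b hb, exitVertex]
  grind

theorem exitVertex_adj_vt {i : ℕ} (hi : 1 ≤ i) (hik : i < t.k) :
    G.Adj (t.exitVertex i) (t.vt (i + 1)) :=
  (t.adj_iff_of_lt hi i.lt_succ_self hik (t.exitVertex_mem_seg ⟨hi, hik.le⟩)
    (t.vt_mem (i + 1) ⟨by omega, hik⟩)).2 ⟨rfl, rfl, rfl⟩

theorem mem_seg_of_adj_or_eq_exitVertex {i l : ℕ} (hik : i < t.k) (hl : l ∈ Set.Icc 1 i) {a b : V}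
    (ha : a ∈ t.seg l) (hab : G.Adj a b) :
    (∃ j ∈ Set.Icc 1 i, b ∈ t.seg j) ∨ a = t.exitVertex i ∧ b = t.vt (i + 1) := by
  have hlk : l ∈ Set.Icc 1 t.k := ⟨hl.1, hl.2.trans hik.le⟩
  have haw : a ≠ t.w := fun h => by
    have hk : t.k ∈ Set.Icc 1 t.k := ⟨t.k_pos, le_rfl⟩
    have hwk : t.w ∈ t.seg t.k := t.w_eq_exitVertex ▸ t.exitVertex_mem_seg hk
    exact (hl.2.trans_lt hik).ne (t.seg_index_unique hlk hk ha (h ▸ hwk))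
  obtain ⟨j, hj, hbj⟩ := t.mem_carrier.1 (t.others_in a (t.mem_carrier.2 ⟨l, hlk, ha⟩) haw b hab)
  refine (le_or_gt j i).imp (fun hji => ⟨j, ⟨hj.1, hji⟩, hbj⟩) fun hij => ?_
  obtain ⟨hjl, hlink⟩ := (t.adj_iff_of_lt hl.1 (hl.2.trans_lt hij) hj.2 ha hbj).1 hab
  obtain rfl : l = i := by have := hl.2; omega
  exact hlink

/-- The tail formed by the segments `R₁, …, R_i` of a tail with more than `i` segments. -/
def take (i : ℕ) (hi : 1 ≤ i) (hik : i < t.k) : Tail G d where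
  carrier := ⋃ j ∈ Set.Icc 1 i, t.seg j
  k := i
  seg := t.seg
  v0 := t.v0
  u0 := t.u0
  vt := t.vt
  vt' := t.vt'
  w := t.exitVertex i
  uT := t.vt (i + 1)
  k_pos := hi
  carrier_eq := rfl
  seg_disj j hj l hl := t.seg_disj j (Set.Icc_subset_Icc_right hik.le hj) l
    (Set.Icc_subset_Icc_right hik.le hl)
  seg1 := t.seg1
  seg1_card := t.seg1_card
  deg2_v0 := t.deg2_v0
  dist2_v0 := t.dist2_v0
  u0_nbrs := t.u0_nbrs
  compl_matching := t.compl_matching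
  seg_card j hj := t.seg_card j (Set.Icc_subset_Icc_right hik.le hj)
  vt_mem j hj := t.vt_mem j (Set.Icc_subset_Icc_right hik.le hj)
  vt'_mem j hj := t.vt'_mem j (Set.Icc_subset_Icc_right hik.le hj)
  vt_ne j hj := t.vt_ne j (Set.Icc_subset_Icc_right hik.le hj)
  seg_adj j hj := t.seg_adj j (Set.Icc_subset_Icc_right hik.le hj)
  inter_seg j hj l hl := t.inter_seg j (Set.Icc_subset_Icc_right hik.le hj) l
    (Set.Icc_subset_Icc_right hik.le hl)
  w_eq_of_k_ge_two h := if_neg (by omega)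
  w_eq_of_k_eq_one h := if_pos h
  w_mem := Set.mem_biUnion (Set.right_mem_Icc.2 hi) (t.exitVertex_mem_seg ⟨hi, hik.le⟩)
  uT_not_mem h := by
    obtain ⟨j, hj, hvt⟩ := Set.mem_iUnion₂.1 h
    have hji := t.seg_index_unique (Set.Icc_subset_Icc_right hik.le hj) ⟨by omega, hik⟩ hvt
      (t.vt_mem (i + 1) ⟨by omega, hik⟩)
    have := hj.2
    omega
  w_adj_uT := t.exitVertex_adj_vt hi hik
  w_unique_out b hab hb := by
    rcases t.mem_seg_of_adj_or_eq_exitVertex hik (Set.right_mem_Icc.2 hi)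
      (t.exitVertex_mem_seg ⟨hi, hik.le⟩) hab with ⟨j, hj, hbj⟩ | hlink
    · exact absurd (Set.mem_biUnion hj hbj) hb
    · exact hlink.2
  others_in a ha haw b hab := by
    obtain ⟨l, hl, hal⟩ := Set.mem_iUnion₂.1 ha
    rcases t.mem_seg_of_adj_or_eq_exitVertex hik hl hal hab with ⟨j, hj, hbj⟩ | hlink
    · exact Set.mem_biUnion hj hbj
    · exact absurd hlink.1 haw

theorem take_carrier_ssubset {i : ℕ} (hi : 1 ≤ i) (hik : i < t.k) :
    (t.take i hi hik).carrier ⊂ t.carrier := by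
  refine (Set.ssubset_iff_of_subset ?_).2
    ⟨t.vt (i + 1), ?_, (t.take i hi hik).uT_not_mem⟩
  · rw [t.carrier_eq]
    exact Set.biUnion_subset_biUnion_left (Set.Icc_subset_Icc_right hik.le)
  · exact t.mem_carrier.2 ⟨i + 1, ⟨by omega, hik⟩, t.vt_mem (i + 1) ⟨by omega, hik⟩⟩

variable {t} {t' : Tail G d} {S : Set V} {p q : V}

theorem mem_iff_mem_of_forall_exitVertex (hS : IsBridgeCut G S p q)
    (hlink : ∀ i, 1 ≤ i → i < t.k → (t.exitVertex i ∈ S ↔ t.vt (i + 1) ∈ S))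
    {x y : V} (hx : x ∈ t.carrier) (hy : y ∈ t.carrier) : x ∈ S ↔ y ∈ S := by
  have exit_iff : ∀ i, 1 ≤ i → i ≤ t.k → (t.exitVertex i ∈ S ↔ t.exitVertex 1 ∈ S) := by
    intro i hi
    induction i, hi using Nat.le_induction with
    | base => exact fun _ => Iff.rfl
    | succ i hi ih =>
      intro hik
      have hi' : i + 1 ∈ Set.Icc 1 t.k := ⟨by omega, hik⟩
      have hvt := t.vt_mem (i + 1) ⟨by omega, hik⟩
      rw [mem_iff_mem_of_mem_seg hi' hS (t.exitVertex_mem_seg hi') hvt, ← hlink i hi hik,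
        ih (by omega)]
  have mem_iff : ∀ z ∈ t.carrier, (z ∈ S ↔ t.exitVertex 1 ∈ S) := fun z hz => by
    obtain ⟨i, hi, hzi⟩ := t.mem_carrier.1 hz
    rw [mem_iff_mem_of_mem_seg hi hS hzi (t.exitVertex_mem_seg hi), exit_iff i hi.1 hi.2]
  rw [mem_iff x hx, mem_iff y hy]

theorem take_carrier_eq_or_eq_compl (hG : G.Preconnected) (hS : IsBridgeCut G S p q) {i : ℕ}
    (hi : 1 ≤ i) (hik : i < t.k) (hsep : ¬ (t.exitVertex i ∈ S ↔ t.vt (i + 1) ∈ S)) :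
    (t.take i hi hik).carrier = S ∨ (t.take i hi hik).carrier = Sᶜ := by
  have hadj := t.exitVertex_adj_vt hi hik
  by_cases hexit : t.exitVertex i ∈ S
  · obtain ⟨rfl, rfl⟩ := hS.eq_of_adj hadj hexit (by tauto)
    exact .inl ((t.take i hi hik).isBridgeCut.eq_of_preconnected hG hS)
  · obtain ⟨rfl, rfl⟩ := hS.eq_of_adj hadj.symm (by tauto) hexit
    exact .inr ((t.take i hi hik).isBridgeCut.eq_of_preconnected hG hS.compl)

theorem isSnake_of_carrier_eq_compl (hG : G.Connected) (hreg : IsRegularGraph G d)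
    (h : t.carrier = t'.carrierᶜ) : IsSnake G d := by
  have hcut : IsBridgeCut G t.carrier t'.uT t'.w := h ▸ t'.isBridgeCut.compl
  obtain ⟨hw, hu⟩ := hcut.eq_of_adj t.w_adj_uT t.w_mem t.uT_not_mem
  refine ⟨hG, hreg, t, t', h ▸ disjoint_compl_left, h ▸ Set.compl_union_self _, hu, hw.symm, ?_⟩
  intro a ha b hb hab
  have hb' : b ∉ t.carrier := h ▸ not_not.2 hb
  exact hu ▸ t.isBridgeCut.eq_of_adj hab ha hb'

theorem carrier_eq_of_mem_of_mem (hG : G.Connected) (hreg : IsRegularGraph G d)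
    (hsnake : ¬ IsSnake G d) (ht : IsProperTail G d t) (ht' : IsProperTail G d t') {x : V}
    (hx : x ∈ t.carrier) (hx' : x ∈ t'.carrier) : t.carrier = t'.carrier := by
  by_cases hlink : ∀ i, 1 ≤ i → i < t.k → (t.exitVertex i ∈ t'.carrier ↔ t.vt (i + 1) ∈ t'.carrier)
  · exact ht t' fun y hy => (mem_iff_mem_of_forall_exitVertex t'.isBridgeCut hlink hx hy).1 hx'
  · exfalso
    simp only [not_forall] at hlink
    obtain ⟨i, hi, hik, hsep⟩ := hlink
    rcases take_carrier_eq_or_eq_compl hG.preconnected t'.isBridgeCut hi hik hsep with h | h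
    · have hssub : t'.carrier ⊂ t.carrier := h ▸ t.take_carrier_ssubset hi hik
      exact hssub.ne (ht' t hssub.subset)
    · exact hsnake (isSnake_of_carrier_eq_compl hG hreg h)

end Tail

theorem stmt14_general {V : Type*} (G : SimpleGraph V) (d : ℕ) (hconn : G.Connected)
    (hreg : IsRegularGraph G d) (hsnake : ¬ IsSnake G d) (u₀ u₀' : V) (R R' : Set V)
    (hR : R = ⋃₀ {S | ∃ t : Tail G d, IsProperTail G d t ∧ t.uT = u₀ ∧ S = t.carrier})
    (hR' : R' = ⋃₀ {S | ∃ t : Tail G d, IsProperTail G d t ∧ t.uT = u₀' ∧ S = t.carrier})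
    (hmeet : (R ∩ R').Nonempty) :
    R = R' := by
  subst hR hR'
  obtain ⟨x, ⟨-, ⟨t, ht, rfl, rfl⟩, hx⟩, ⟨-, ⟨t', ht', rfl, rfl⟩, hx'⟩⟩ := hmeet
  have hcarrier : t.carrier = t'.carrier :=
    Tail.carrier_eq_of_mem_of_mem hconn hreg hsnake ht ht' hx hx'
  have hcut : IsBridgeCut G t'.carrier t.w t.uT := hcarrier ▸ t.isBridgeCut
  rw [(t'.isBridgeCut.eq_of_adj hcut.adj hcut.left_mem hcut.right_notMem).2]

/-- Let `d > 6` be odd, `G` connected `d`-regular with `G²` not complete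
and not a snake graph. Let `R` (resp. `R'`) be the union of the maximal collection of all
proper tails whose outside attachment vertex is `u₀` (resp. `u₀'`). If `R ∩ R' ≠ ∅`
then `R = R'`. -/
theorem stmt14 {V : Type*} [Fintype V] (G : SimpleGraph V) (d : ℕ) (hd : 6 < d)
    (hodd : Odd d) (hconn : G.Connected) (hreg : IsRegularGraph G d)
    (hnotcomplete : graphSquare G ≠ ⊤) (hsnake : ¬ IsSnake G d)
    (u₀ u₀' : V) (R R' : Set V)
    (hR : R = ⋃₀ {S | ∃ t : Tail G d, IsProperTail G d t ∧ t.uT = u₀ ∧ S = t.carrier})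
    (hR' : R' = ⋃₀ {S | ∃ t : Tail G d, IsProperTail G d t ∧ t.uT = u₀' ∧ S = t.carrier})
    (hmeet : (R ∩ R').Nonempty) :
    R = R' :=
  stmt14_general G d hconn hreg hsnake u₀ u₀' R R' hR hR' hmeet
end
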